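/- Let μ be a probability measure on a measurable space Ω, let λ > 0, let Â : Ω → ℝ be measurable and μ-integrable with ∫ Â dμ = 0, assume Z := ∫ exp(Â(x)/λ) dμ(x) is finite and positive and that x ↦ Â(x)·exp(Â(x)/λ) is μ-integrable, and let ν be the exponentially tilted measure of μ by Â with parameter λ. Let A : Ω → ℝ be measurable with sup_x |Â(x) − A(x)| ≤ ε for some ε ≥ 0. Then A is ν-integrable and ∫ A dν ≥ λ·KL(ν‖μ) − ε. -/

import Mathlib

open MeasureTheory Real

/-- Kullback–Leibler divergence `KL(ν‖μ) = ∫ log(dν/dμ) dν`. -/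
noncomputable def klDiv {Ω : Type*} [MeasurableSpace Ω] (ν μ : Measure Ω) : ℝ :=
  ∫ x, Real.log ((ν.rnDeriv μ x).toReal) ∂ν

theorem true_advantage_lower_bound
    {Ω : Type*} [MeasurableSpace Ω] (μ : Measure Ω) [IsProbabilityMeasure μ]
    (lam : ℝ) (hlam : 0 < lam)
    (Ahat : Ω → ℝ) (hAhat : Measurable Ahat)
    (hAhatInt : Integrable Ahat μ) (hAhat0 : ∫ x, Ahat x ∂μ = 0)
    (hZfin : Integrable (fun x => Real.exp (Ahat x / lam)) μ)
    (hZpos : 0 < ∫ x, Real.exp (Ahat x / lam) ∂μ)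
    (hAexp : Integrable (fun x => Ahat x * Real.exp (Ahat x / lam)) μ)
    (ν : Measure Ω) (hν : ν = μ.tilted (fun x => Ahat x / lam))
    (A : Ω → ℝ) (hA : Measurable A)
    (ε : ℝ) (hε : 0 ≤ ε) (hclose : ∀ x, |Ahat x - A x| ≤ ε) :
    Integrable A ν ∧ lam * klDiv ν μ - ε ≤ ∫ x, A x ∂ν := by
  subst hν
  have hprob : IsProbabilityMeasure (μ.tilted (fun x => Ahat x / lam)) :=
    isProbabilityMeasure_tilted hZfin
  have hint : Integrable Ahat (μ.tilted (fun x => Ahat x / lam)) := by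
    rw [integrable_tilted_iff hZfin]
    refine hAexp.congr (Filter.Eventually.of_forall fun x => ?_)
    simp [mul_comm]
  have hdiff : Integrable (fun x => Ahat x - A x) (μ.tilted (fun x => Ahat x / lam)) :=
    Integrable.of_bound (hAhat.sub hA).aestronglyMeasurable ε
      (Filter.Eventually.of_forall fun x => by simpa using hclose x)
  have hAi : Integrable A (μ.tilted (fun x => Ahat x / lam)) := by
    refine (hint.sub hdiff).congr (Filter.Eventually.of_forall fun x => ?_)
    simp
  refine ⟨hAi, ?_⟩
  have hZ1 : 1 ≤ ∫ x, Real.exp (Ahat x / lam) ∂μ := by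
    have h1 : ∫ x, (Ahat x / lam + 1) ∂μ = 1 := by
      rw [integral_add (hAhatInt.div_const lam) (integrable_const _), integral_div, hAhat0]
      simp
    rw [← h1]
    exact integral_mono ((hAhatInt.div_const lam).add (integrable_const _)) hZfin
      (fun x => Real.add_one_le_exp _)
  have hlog := Real.log_nonneg hZ1
  have hkl : klDiv (μ.tilted (fun x => Ahat x / lam)) μ
      = (∫ x, Ahat x ∂(μ.tilted (fun x => Ahat x / lam))) / lam
        - Real.log (∫ x, Real.exp (Ahat x / lam) ∂μ) := by
    unfold klDiv
    rw [integral_congr_ae ((tilted_absolutelyContinuous μ _).ae_le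
      (log_rnDeriv_tilted_left_self hZfin)),
      integral_sub (hint.div_const lam) (integrable_const _), integral_div]
    simp
  have hle : ∫ x, Ahat x - A x ∂(μ.tilted (fun x => Ahat x / lam)) ≤ ε := by
    have := integral_mono hdiff (integrable_const ε)
      (fun x => (le_abs_self _).trans (hclose x))
    simpa using this
  rw [integral_sub hint hAi] at hle
  rw [hkl, mul_sub, mul_div_cancel₀ _ hlam.ne']
  have := mul_nonneg hlam.le hlog
  linarith
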